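/- Let Fin denote the set of elements (κ̂,κ̄) ∈ G(T,R) such that κ̂ maps V into V and fixes all but finitely many of the standard basis vectors (δ_i,0), (0,δ_i), i ∈ ℕ, of V, and let St_W := {(φ,φ̄) ∈ G(T,R) : φ(W^♯) ∩ V = W}. Then {(φ,φ̄) ∈ G(T,R) : d(φ) = 0} = Fin · St_W; that is, an element of G(T,R) has degree 0 if and only if it is a product of an element of Fin and an element of St_W. -/

import Mathlib

open Module Submodule

noncomputable section

abbrev TT : Type := (ℕ → ℂ) × (ℕ →₀ ℂ)
abbrev RR : Type := (ℕ →₀ ℂ) × (ℕ → ℂ)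

lemma lc_v_add (v w : ℕ → ℂ) (l : ℕ →₀ ℂ) :
    Finsupp.linearCombination ℂ (v + w) l
      = Finsupp.linearCombination ℂ v l + Finsupp.linearCombination ℂ w l := by
  classical
  simp only [Finsupp.linearCombination_apply]
  rw [← Finsupp.sum_add]
  exact Finsupp.sum_congr fun i _ => by simp [Pi.add_apply, smul_add, mul_add]

lemma lc_v_smul (c : ℂ) (v : ℕ → ℂ) (l : ℕ →₀ ℂ) :
    Finsupp.linearCombination ℂ (c • v) l = c • Finsupp.linearCombination ℂ v l := by
  classical
  simp only [Finsupp.linearCombination_apply, Finsupp.smul_sum]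
  exact Finsupp.sum_congr fun i _ => by simp [Pi.smul_apply, smul_comm, smul_eq_mul, mul_left_comm]

/-- The nondegenerate pairing `p : T × R → ℂ`,
`p((ω,u),(w,ν)) = Σ_i ω(i)w(i) + Σ_i u(i)ν(i)`. -/
def pairB : TT →ₗ[ℂ] RR →ₗ[ℂ] ℂ :=
  LinearMap.mk₂ ℂ
    (fun x y => Finsupp.linearCombination ℂ x.1 y.1 + Finsupp.linearCombination ℂ y.2 x.2)
    (fun x x' y => by
      simp only [Prod.fst_add, Prod.snd_add, lc_v_add, map_add]; ring)
    (fun c x y => by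
      simp only [Prod.smul_fst, Prod.smul_snd, lc_v_smul, map_smul, smul_add])
    (fun x y y' => by
      simp only [Prod.fst_add, Prod.snd_add, lc_v_add, map_add]; ring)
    (fun c x y => by
      simp only [Prod.smul_fst, Prod.smul_snd, lc_v_smul, map_smul, smul_add])

/-- The Mackey-group condition on a pair of automorphisms:
`p(φ x, y) = p(x, φ̄ y)` for all `x ∈ T`, `y ∈ R`. -/
def IsMackey (φ : TT ≃ₗ[ℂ] TT) (ψ : RR ≃ₗ[ℂ] RR) : Prop :=
  ∀ (x : TT) (y : RR), pairB (φ x) y = pairB x (ψ y)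

/-- `W^♯ = (ℕ→ℂ) × {0} ⊆ T`. -/
def Wsharp : Submodule ℂ TT := LinearMap.range (LinearMap.inl ℂ (ℕ → ℂ) (ℕ →₀ ℂ))

/-- `U^♯ = {0} × (ℕ→ℂ) ⊆ R`. -/
def Usharp : Submodule ℂ RR := LinearMap.range (LinearMap.inr ℂ (ℕ →₀ ℂ) (ℕ → ℂ))

/-- `V = (ℕ→₀ℂ) × (ℕ→₀ℂ) ⊆ T`. -/
def Vsub : Submodule ℂ TT :=
  LinearMap.range
    ((Finsupp.lcoeFun : (ℕ →₀ ℂ) →ₗ[ℂ] (ℕ → ℂ)).prodMap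
      (LinearMap.id : (ℕ →₀ ℂ) →ₗ[ℂ] (ℕ →₀ ℂ)))

/-- `W = (ℕ→₀ℂ) × {0} ⊆ T`. -/
def Wsub : Submodule ℂ TT :=
  LinearMap.range
    ((LinearMap.inl ℂ (ℕ → ℂ) (ℕ →₀ ℂ)).comp
      (Finsupp.lcoeFun : (ℕ →₀ ℂ) →ₗ[ℂ] (ℕ → ℂ)))

/-- `π_U : T → (ℕ→₀ℂ)`, the second projection. -/
def piU : TT →ₗ[ℂ] (ℕ →₀ ℂ) := LinearMap.snd ℂ (ℕ → ℂ) (ℕ →₀ ℂ)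

/-- `π_{W*} : R → (ℕ→₀ℂ)`, the first projection. -/
def piW : RR →ₗ[ℂ] (ℕ →₀ ℂ) := LinearMap.fst ℂ (ℕ →₀ ℂ) (ℕ → ℂ)

/-- The degree `d(φ) = dim π_U(φ(W^♯)) − dim π_U(φ^{-1}(W^♯))`. -/
def deg (φ : TT ≃ₗ[ℂ] TT) : ℤ :=
  (Module.finrank ℂ ((Wsharp.map φ.toLinearMap).map piU) : ℤ) -
    (Module.finrank ℂ ((Wsharp.map φ.symm.toLinearMap).map piU) : ℤ)

/-- `span {(δ_i, 0) : i ≥ n} ⊆ T`. -/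
def tailSpan (n : ℕ) : Submodule ℂ TT :=
  Submodule.span ℂ
    ((fun i => ((((Finsupp.single i (1 : ℂ)) : ℕ →₀ ℂ) : ℕ → ℂ), (0 : ℕ →₀ ℂ))) '' {i | n ≤ i})

/-- `W'` is E-commensurable of index `k` with `W`:
`W' = G ⊕ span{(δ_i,0) : i ≥ n}` with `G ⊆ V` finite-dimensional of dimension `n + k`. -/
def Ecomm (W' : Submodule ℂ TT) (k : ℤ) : Prop :=
  ∃ (n : ℕ) (G : Submodule ℂ TT), G ≤ Vsub ∧ FiniteDimensional ℂ G ∧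
    (Module.finrank ℂ G : ℤ) = (n : ℤ) + k ∧ Disjoint G (tailSpan n) ∧
    W' = G ⊔ tailSpan n

/-- `W'^⊥ = {y ∈ R : p(x,y) = 0 for all x ∈ W'}`. -/
def perpR (W' : Submodule ℂ TT) : Submodule ℂ RR :=
  ⨅ x ∈ (W' : Set TT), LinearMap.ker (pairB x)

/-- `Y^⊥ = {x ∈ T : p(x,y) = 0 for all y ∈ Y}`. -/
def perpT (Y : Submodule ℂ RR) : Submodule ℂ TT :=
  ⨅ y ∈ (Y : Set RR), LinearMap.ker (pairB.flip y)

/-- The action `φ·W' = φ((W'^⊥)^⊥) ∩ V`. -/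
def actOn (φ : TT ≃ₗ[ℂ] TT) (W' : Submodule ℂ TT) : Submodule ℂ TT :=
  ((perpT (perpR W')).map φ.toLinearMap) ⊓ Vsub

end
noncomputable section

/-- The Mackey group `G(T,R)` of pairs `(φ, φ̄)`, as a subgroup of the product of the
automorphism group of `T` with the opposite of the automorphism group of `R`
(so that composition is componentwise). -/
def Mackey : Subgroup ((TT ≃ₗ[ℂ] TT) × (RR ≃ₗ[ℂ] RR)ᵐᵒᵖ) where
  carrier := {a | IsMackey a.1 a.2.unop}
  one_mem' := fun _ _ => rfl
  mul_mem' := by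
    intro a b ha hb
    intro x y
    simp only [Prod.fst_mul, Prod.snd_mul]
    have h1 : (a.1 * b.1) x = a.1 (b.1 x) := rfl
    have h2 : ((a.2 * b.2).unop) y = b.2.unop (a.2.unop y) := rfl
    rw [h1, h2, ha, hb]
  inv_mem' := by
    intro a ha
    intro x y
    have := ha (a.1⁻¹ x) (a.2.unop⁻¹ y)
    have h1 : a.1 (a.1⁻¹ x) = x := a.1.apply_symm_apply x
    have h2 : a.2.unop (a.2.unop⁻¹ y) = y := a.2.unop.apply_symm_apply y
    simp only [Prod.fst_inv, Prod.snd_inv]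
    have h4 : (a.2⁻¹).unop = a.2.unop⁻¹ := rfl
    rw [h4]
    rw [h1, h2] at this
    exact this.symm

end


noncomputable section

/-- The subset `Fin ⊆ G(T,R)` of elements whose first component maps `V` into `V` and fixes
all but finitely many of the standard basis vectors `(δ_i,0)`, `(0,δ_i)` of `V`. -/
def FinSet : Set Mackey :=
  {a | Submodule.map (a.val.1.toLinearMap) Vsub ≤ Vsub ∧
    {i : ℕ |
      a.val.1 ((((Finsupp.single i (1 : ℂ)) : ℕ →₀ ℂ) : ℕ → ℂ), (0 : ℕ →₀ ℂ))
          ≠ ((((Finsupp.single i (1 : ℂ)) : ℕ →₀ ℂ) : ℕ → ℂ), (0 : ℕ →₀ ℂ)) ∨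
      a.val.1 ((0 : ℕ → ℂ), Finsupp.single i (1 : ℂ))
          ≠ ((0 : ℕ → ℂ), Finsupp.single i (1 : ℂ))}.Finite}

/-- The stabilizer `St_W = {(φ,φ̄) ∈ G(T,R) : φ(W^♯) ∩ V = W}`. -/
def StW : Set Mackey :=
  {a | (Wsharp.map a.val.1.toLinearMap) ⊓ Vsub = Wsub}

end

noncomputable section

/-- The `i`-th standard basis vector of `W`. -/
abbrev basisW (i : ℕ) : TT := ((((Finsupp.single i (1 : ℂ)) : ℕ →₀ ℂ) : ℕ → ℂ), (0 : ℕ →₀ ℂ))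

lemma pairB_apply (x : TT) (y : RR) :
    pairB x y = Finsupp.linearCombination ℂ x.1 y.1 + Finsupp.linearCombination ℂ y.2 x.2 := rfl

lemma pairB_basisW (i : ℕ) (y : RR) : pairB (basisW i) y = y.1 i := by
  simp [pairB_apply, Finsupp.linearCombination_apply, Finsupp.sum, Finsupp.single_apply]
  exact fun h => h.symm

lemma pairB_single_left (x : TT) (i : ℕ) :
    pairB x ((Finsupp.single i (1 : ℂ) : ℕ →₀ ℂ), (0 : ℕ → ℂ)) = x.1 i := by
  simp [pairB_apply, Finsupp.linearCombination_apply]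

lemma pairB_single_right (x : TT) (i : ℕ) :
    pairB x ((0 : ℕ →₀ ℂ), ((Finsupp.single i (1 : ℂ) : ℕ →₀ ℂ) : ℕ → ℂ)) = x.2 i := by
  simp [pairB_apply, Finsupp.linearCombination_apply, Finsupp.sum, Finsupp.single_apply]
  exact fun h => h.symm

lemma pairB_zero_single (i : ℕ) (y : RR) :
    pairB ((0 : ℕ → ℂ), Finsupp.single i (1 : ℂ)) y = y.2 i := by
  simp [pairB_apply, Finsupp.linearCombination_apply]

lemma ext_of_pairB_left {x x' : TT} (h : ∀ y, pairB x y = pairB x' y) : x = x' := by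
  refine Prod.ext (funext fun i => ?_) (Finsupp.ext fun i => ?_)
  · rw [← pairB_single_left, ← pairB_single_left, h]
  · rw [← pairB_single_right, ← pairB_single_right, h]

lemma ext_of_pairB_right {y y' : RR} (h : ∀ x, pairB x y = pairB x y') : y = y' := by
  refine Prod.ext (Finsupp.ext fun i => ?_) (funext fun i => ?_)
  · rw [← pairB_basisW, ← pairB_basisW, h]
  · rw [← pairB_zero_single, ← pairB_zero_single, h]

lemma linearCombination_coe_comm (u w : ℕ →₀ ℂ) :
    Finsupp.linearCombination ℂ (⇑u) w = Finsupp.linearCombination ℂ (⇑w) u := by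
  induction w using Finsupp.induction_linear with
  | zero => simp [Finsupp.linearCombination_apply]
  | add f g hf hg => rw [map_add, hf, hg, Finsupp.coe_add, lc_v_add]
  | single i c =>
    have hu : Finsupp.linearCombination ℂ (⇑(Finsupp.single i c)) u = u i * c := by
      rw [Finsupp.linearCombination_apply, Finsupp.sum_eq_single i _ (fun _ => zero_smul ℂ _)]
      · simp
      · intro j _ hj
        simp [Finsupp.single_eq_of_ne hj]
    rw [hu, Finsupp.linearCombination_single, smul_eq_mul, mul_comm]

lemma mem_Wsharp {x : TT} : x ∈ Wsharp ↔ x.2 = 0 := by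
  constructor
  · rintro ⟨ω, rfl⟩; rfl
  · intro h; exact ⟨x.1, Prod.ext rfl h.symm⟩

lemma mem_Vsub {x : TT} : x ∈ Vsub ↔ ∃ u : ℕ →₀ ℂ, x.1 = ⇑u := by
  constructor
  · rintro ⟨u, rfl⟩; exact ⟨u.1, rfl⟩
  · rintro ⟨u, h⟩; exact ⟨(u, x.2), Prod.ext h.symm rfl⟩

lemma mem_Wsub {x : TT} : x ∈ Wsub ↔ (∃ u : ℕ →₀ ℂ, x.1 = ⇑u) ∧ x.2 = 0 := by
  constructor
  · rintro ⟨u, rfl⟩; exact ⟨⟨u, rfl⟩, rfl⟩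
  · rintro ⟨⟨u, h⟩, h2⟩; exact ⟨u, Prod.ext h.symm h2.symm⟩

lemma Wsharp_inf_Vsub : Wsharp ⊓ Vsub = Wsub := by
  ext x
  rw [Submodule.mem_inf, mem_Wsharp, mem_Vsub, mem_Wsub, and_comm]

/-- A sequence of finitely supported functionals on `ℂ^ℕ` that is eventually zero at each point
is eventually zero. -/
lemma eventually_eq_zero_of_pointwise (w : ℕ → (ℕ →₀ ℂ))
    (h : ∀ ω : ℕ → ℂ, ∃ n, ∀ i ≥ n, Finsupp.linearCombination ℂ ω (w i) = 0) :
    ∃ n, ∀ i ≥ n, w i = 0 := by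
  let F : (ℕ → ℂ) →ₗ[ℂ] (ℕ → ℂ) :=
    { toFun := fun ω i => Finsupp.linearCombination ℂ ω (w i)
      map_add' := fun a b => funext fun i => lc_v_add a b (w i)
      map_smul' := fun c a => funext fun i => lc_v_smul c a (w i) }
  have hF : Continuous F := by
    refine continuous_pi fun i => ?_
    change Continuous fun ω : ℕ → ℂ => Finsupp.linearCombination ℂ ω (w i)
    simp only [Finsupp.linearCombination_apply, Finsupp.sum, smul_eq_mul]
    fun_prop
  let K : ℕ → Submodule ℂ (ℕ → ℂ) := fun n =>
    ⨅ i ∈ Set.Ici n, LinearMap.ker (LinearMap.proj i ∘ₗ F)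
  have memK : ∀ n ω, ω ∈ K n ↔ ∀ i ≥ n, F ω i = 0 := fun n ω => by simp [K, Submodule.mem_iInf]
  have hclosed : ∀ n, IsClosed (K n : Set (ℕ → ℂ)) := fun n => by
    have : (K n : Set (ℕ → ℂ)) = ⋂ i ∈ Set.Ici n, {ω | F ω i = 0} := by
      ext ω; simp [memK]
    rw [this]
    exact isClosed_biInter fun i _ =>
      isClosed_eq ((continuous_apply i).comp hF) continuous_const
  obtain ⟨n, hn⟩ := nonempty_interior_of_iUnion_of_closed hclosed
    (Set.eq_univ_of_forall fun ω => by
      obtain ⟨n, hn⟩ := h ω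
      exact Set.mem_iUnion.2 ⟨n, (memK n ω).2 hn⟩)
  have htop : K n = ⊤ := Submodule.eq_top_of_nonempty_interior' (K n) hn
  refine ⟨n, fun i hi => Finsupp.ext fun j => ?_⟩
  have := (memK n (Pi.single j 1)).1 (htop ▸ Submodule.mem_top) i hi
  change Finsupp.linearCombination ℂ (Pi.single j 1) (w i) = 0 at this
  simpa [Finsupp.linearCombination_apply, Finsupp.sum, Pi.single_apply] using this

lemma IsMackey.snd_apply {φ : TT ≃ₗ[ℂ] TT} {ψ : RR ≃ₗ[ℂ] RR} (h : IsMackey φ ψ)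
    (ω : ℕ → ℂ) (i : ℕ) :
    (φ (ω, 0)).2 i = Finsupp.linearCombination ℂ ω
      (ψ ((0 : ℕ →₀ ℂ), ((Finsupp.single i (1 : ℂ) : ℕ →₀ ℂ) : ℕ → ℂ))).1 := by
  rw [← pairB_single_right, h, pairB_apply]
  simp

/-- The block `W^♯ → U` of an element of the Mackey group is a finite matrix. -/
lemma IsMackey.exists_finite_block {φ : TT ≃ₗ[ℂ] TT} {ψ : RR ≃ₗ[ℂ] RR} (h : IsMackey φ ψ) :
    ∃ n, (∀ ω : ℕ → ℂ, ∀ i ≥ n, (φ (ω, 0)).2 i = 0) ∧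
      ∀ ω : ℕ → ℂ, (∀ j < n, ω j = 0) → (φ (ω, 0)).2 = 0 := by
  set w : ℕ → (ℕ →₀ ℂ) := fun i =>
    (ψ ((0 : ℕ →₀ ℂ), ((Finsupp.single i (1 : ℂ) : ℕ →₀ ℂ) : ℕ → ℂ))).1 with hw
  have hval : ∀ ω i, (φ (ω, 0)).2 i = Finsupp.linearCombination ℂ ω (w i) :=
    fun ω i => h.snd_apply ω i
  have bound : ∀ u : ℕ →₀ ℂ, ∃ n, ∀ i ≥ n, u i = 0 := fun u => by
    obtain ⟨n, hn⟩ := u.support.exists_nat_subset_range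
    refine ⟨n, fun i hi => Finsupp.notMem_support_iff.1 fun hmem => ?_⟩
    have := Finset.mem_range.1 (hn hmem)
    omega
  obtain ⟨n, hn⟩ := eventually_eq_zero_of_pointwise w fun ω => by
    obtain ⟨n, hn⟩ := bound (φ (ω, 0)).2
    exact ⟨n, fun i hi => by rw [← hval, hn i hi]⟩
  choose m hm using fun i => bound (w i)
  refine ⟨max n ((Finset.range n).sup m), fun ω i hi => ?_, fun ω hω => Finsupp.ext fun i => ?_⟩
  · rw [hval, hn i (le_trans (le_max_left _ _) hi), map_zero]
  · rw [hval]
    rcases lt_or_ge i n with hi | hi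
    · rw [Finsupp.linearCombination_apply]
      refine Finset.sum_eq_zero fun j _ => ?_
      by_cases hj : m i ≤ j
      · simp [hm i j hj]
      · have h1 : m i ≤ (Finset.range n).sup m := Finset.le_sup (Finset.mem_range.2 hi)
        have h2 : ω j = 0 := hω j (by
          have := le_max_right n ((Finset.range n).sup m)
          omega)
        simp [h2]
    · rw [hn i hi, map_zero]; rfl

/-- The coordinate space of the first `n` basis vectors of `W` and of `U`. -/
abbrev TruncSpace (n : ℕ) : Type := (Fin n → ℂ) × (Fin n → ℂ)

/-- Extension by zero of a vector of length `n`. -/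
def extZero (n : ℕ) : (Fin n → ℂ) →ₗ[ℂ] (ℕ →₀ ℂ) :=
  ∑ i : Fin n, (Finsupp.lsingle (i : ℕ)) ∘ₗ LinearMap.proj i

lemma extZero_apply (n : ℕ) (a : Fin n → ℂ) :
    extZero n a = ∑ i : Fin n, Finsupp.single (i : ℕ) (a i) := by
  simp [extZero, LinearMap.sum_apply]

lemma extZero_apply_fin (n : ℕ) (a : Fin n → ℂ) (k : Fin n) : extZero n a (k : ℕ) = a k := by
  rw [extZero_apply, Finsupp.finsetSum_apply, Finset.sum_eq_single k] <;>
    simp +contextual [Fin.val_inj]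

lemma extZero_apply_ge (n : ℕ) (a : Fin n → ℂ) {j : ℕ} (hj : n ≤ j) : extZero n a j = 0 := by
  rw [extZero_apply, Finsupp.finsetSum_apply]
  refine Finset.sum_eq_zero fun i _ => Finsupp.single_eq_of_ne ?_
  omega

lemma linearCombination_extZero (n : ℕ) (a : Fin n → ℂ) (v : ℕ → ℂ) :
    Finsupp.linearCombination ℂ v (extZero n a) = ∑ i : Fin n, a i * v i := by
  simp [extZero_apply, map_sum]

/-- The inclusion of the truncated coordinate space into `T`. -/
def incl (n : ℕ) : TruncSpace n →ₗ[ℂ] TT :=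
  ((Finsupp.lcoeFun : (ℕ →₀ ℂ) →ₗ[ℂ] (ℕ → ℂ)) ∘ₗ extZero n).prodMap (extZero n)

/-- The restriction of an element of `T` to its first `n` coordinates. -/
def restr (n : ℕ) : TT →ₗ[ℂ] TruncSpace n :=
  (LinearMap.funLeft ℂ ℂ (Fin.val : Fin n → ℕ)).prodMap
    (LinearMap.funLeft ℂ ℂ (Fin.val : Fin n → ℕ) ∘ₗ Finsupp.lcoeFun)

lemma incl_apply (n : ℕ) (k : TruncSpace n) : incl n k = (⇑(extZero n k.1), extZero n k.2) := rfl

lemma restr_apply (n : ℕ) (x : TT) :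
    restr n x = ((fun i : Fin n => x.1 i), fun i : Fin n => x.2 i) := rfl

lemma restr_incl (n : ℕ) (k : TruncSpace n) : restr n (incl n k) = k := by
  rw [restr_apply, incl_apply]
  exact Prod.ext (funext fun i => extZero_apply_fin n _ i) (funext fun i => extZero_apply_fin n _ i)

lemma incl_mem_Vsub (n : ℕ) (k : TruncSpace n) : incl n k ∈ Vsub := mem_Vsub.2 ⟨_, rfl⟩

/-- The transpose of `restr n` with respect to the pairing. -/
def restrAdj (n : ℕ) : Module.Dual ℂ (TruncSpace n) →ₗ[ℂ] RR where
  toFun f := (extZero n (fun i => f (Pi.single i 1, 0)), ⇑(extZero n (fun i => f (0, Pi.single i 1))))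
  map_add' f g := by
    refine Prod.ext ?_ ?_
    · exact map_add (extZero n) _ _
    · exact congrArg DFunLike.coe (map_add (extZero n) _ _)
  map_smul' c f := by
    refine Prod.ext ?_ ?_
    · exact map_smul (extZero n) _ _
    · exact congrArg DFunLike.coe (map_smul (extZero n) _ _)

lemma pairB_restrAdj (n : ℕ) (x : TT) (f : Module.Dual ℂ (TruncSpace n)) :
    pairB x (restrAdj n f) = f (restr n x) := by
  have hpi : ∀ (g : (Fin n → ℂ) →ₗ[ℂ] ℂ) (a : Fin n → ℂ),
      ∑ i, g (Pi.single i 1) * a i = g a := fun g a => by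
    rw [LinearMap.pi_apply_eq_sum_univ g a]
    refine Finset.sum_congr rfl fun i _ => ?_
    rw [smul_eq_mul, mul_comm]
    congr 2
    ext j
    simp [Pi.single_apply, eq_comm]
  have h1 := hpi (f ∘ₗ LinearMap.inl ℂ _ _) (restr n x).1
  have h2 := hpi (f ∘ₗ LinearMap.inr ℂ _ _) (restr n x).2
  have h3 : f (restr n x) = f ((restr n x).1, 0) + f (0, (restr n x).2) := by
    rw [← map_add]; simp
  rw [h3, pairB_apply]
  change Finsupp.linearCombination ℂ x.1 (extZero n _) +
    Finsupp.linearCombination ℂ (⇑(extZero n _)) x.2 = _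
  rw [linearCombination_coe_comm, linearCombination_extZero, linearCombination_extZero]
  exact congrArg₂ (· + ·) h1 h2

/-- The endomorphism of `T` acting as `g` on the first `n` coordinates and trivially elsewhere. -/
def blockT (n : ℕ) (g : TruncSpace n →ₗ[ℂ] TruncSpace n) : TT →ₗ[ℂ] TT :=
  LinearMap.id + incl n ∘ₗ (g - LinearMap.id) ∘ₗ restr n

/-- The transpose of `blockT n g`. -/
def blockR (n : ℕ) (g : TruncSpace n →ₗ[ℂ] TruncSpace n) : RR →ₗ[ℂ] RR :=
  LinearMap.id +
    restrAdj n ∘ₗ (g - LinearMap.id).dualMap ∘ₗ (incl n).dualMap ∘ₗ pairB.flip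

lemma blockT_apply (n : ℕ) (g : TruncSpace n →ₗ[ℂ] TruncSpace n) (x : TT) :
    blockT n g x = x + incl n (g (restr n x) - restr n x) := rfl

lemma pairB_blockT (n : ℕ) (g : TruncSpace n →ₗ[ℂ] TruncSpace n) (x : TT) (y : RR) :
    pairB (blockT n g x) y = pairB x (blockR n g y) := by
  simp [blockT, blockR, pairB_restrAdj]

lemma blockT_comp {n : ℕ} {g g' : TruncSpace n →ₗ[ℂ] TruncSpace n} (h : ∀ k, g (g' k) = k) (x : TT) :
    blockT n g (blockT n g' x) = x := by
  have : restr n (blockT n g' x) = g' (restr n x) := by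
    rw [blockT_apply, map_add, restr_incl]; abel
  rw [blockT_apply n g, this, blockT_apply, h, add_assoc, ← map_add]
  simp

lemma blockR_comp {n : ℕ} {g g' : TruncSpace n →ₗ[ℂ] TruncSpace n} (h : ∀ k, g (g' k) = k) (y : RR) :
    blockR n g' (blockR n g y) = y :=
  ext_of_pairB_right fun x => by rw [← pairB_blockT, ← pairB_blockT, blockT_comp h]

/-- `blockT n g` as an automorphism. -/
def blockEquivT (n : ℕ) (g : TruncSpace n ≃ₗ[ℂ] TruncSpace n) : TT ≃ₗ[ℂ] TT :=
  LinearEquiv.ofLinearMap (blockT n g.toLinearMap) (blockT n g.symm.toLinearMap)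
    (LinearMap.ext fun x => by
      rw [LinearMap.comp_apply, blockT_comp fun k => g.apply_symm_apply k, LinearMap.id_apply])
    (LinearMap.ext fun x => by
      rw [LinearMap.comp_apply, blockT_comp fun k => g.symm_apply_apply k, LinearMap.id_apply])

/-- `blockR n g` as an automorphism. -/
def blockEquivR (n : ℕ) (g : TruncSpace n ≃ₗ[ℂ] TruncSpace n) : RR ≃ₗ[ℂ] RR :=
  LinearEquiv.ofLinearMap (blockR n g.toLinearMap) (blockR n g.symm.toLinearMap)
    (LinearMap.ext fun y => by
      rw [LinearMap.comp_apply, blockR_comp fun k => g.symm_apply_apply k, LinearMap.id_apply])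
    (LinearMap.ext fun y => by
      rw [LinearMap.comp_apply, blockR_comp fun k => g.apply_symm_apply k, LinearMap.id_apply])

/-- The element of the Mackey group acting as `g` on the first `n` coordinates of `W` and `U`. -/
def blockMackey (n : ℕ) (g : TruncSpace n ≃ₗ[ℂ] TruncSpace n) : Mackey :=
  ⟨(blockEquivT n g, MulOpposite.op (blockEquivR n g)), fun x y => pairB_blockT n g x y⟩

lemma blockMackey_apply (n : ℕ) (g : TruncSpace n ≃ₗ[ℂ] TruncSpace n) (x : TT) :
    (blockMackey n g).val.1 x = x + incl n (g (restr n x) - restr n x) := rfl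

lemma blockMackey_mem_FinSet (n : ℕ) (g : TruncSpace n ≃ₗ[ℂ] TruncSpace n) : blockMackey n g ∈ FinSet := by
  constructor
  · rintro _ ⟨x, hx, rfl⟩
    exact Vsub.add_mem hx (incl_mem_Vsub n _)
  · refine (Set.finite_lt_nat n).subset fun i hi => ?_
    by_contra hin
    have hz : ∀ x : TT, restr n x = 0 → (blockMackey n g).val.1 x = x := fun x hx => by
      rw [blockMackey_apply, hx]; simp
    have hne : ∀ j : Fin n, i ≠ (j : ℕ) := fun j hj => hin (by rw [hj]; exact j.2)
    rcases hi with hi | hi <;> refine hi (hz _ ?_) <;> rw [restr_apply] <;>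
      refine Prod.ext (funext fun j => ?_) (funext fun j => ?_) <;>
      simp [hne j]

/-- `Y` contains the vectors of `W^♯` supported in degrees `≥ n`, and its `U`-components are
supported in degrees `< n`. -/
def Adapted (n : ℕ) (Y : Submodule ℂ TT) : Prop :=
  (∀ ω : ℕ → ℂ, (∀ j < n, ω j = 0) → (ω, (0 : ℕ →₀ ℂ)) ∈ Y) ∧ ∀ y ∈ Y, ∀ i ≥ n, y.2 i = 0

lemma sub_incl_restr_fst (n : ℕ) (x : TT) (j : ℕ) (hj : j < n) :
    (x - incl n (restr n x)).1 j = 0 := by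
  have := extZero_apply_fin n (restr n x).1 ⟨j, hj⟩
  rw [incl_apply, Prod.fst_sub, Pi.sub_apply, sub_eq_zero]
  exact this.symm

lemma sub_incl_restr_snd {n : ℕ} {x : TT} (hx : ∀ i ≥ n, x.2 i = 0) :
    (x - incl n (restr n x)).2 = 0 := by
  ext j
  rw [incl_apply, Prod.snd_sub, Finsupp.sub_apply]
  rcases lt_or_ge j n with hj | hj
  · rw [extZero_apply_fin n (restr n x).2 ⟨j, hj⟩]; simp [restr_apply]
  · rw [hx j hj, extZero_apply_ge n _ hj]; simp

lemma Adapted.sub_mem {n : ℕ} {Y : Submodule ℂ TT} (h : Adapted n Y) {x : TT}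
    (hx : ∀ i ≥ n, x.2 i = 0) : x - incl n (restr n x) ∈ Y := by
  have := h.1 (x - incl n (restr n x)).1 (sub_incl_restr_fst n x)
  rwa [← sub_incl_restr_snd hx] at this

lemma Adapted.incl_restr_mem {n : ℕ} {Y : Submodule ℂ TT} (h : Adapted n Y) {x : TT}
    (hx : x ∈ Y) : incl n (restr n x) ∈ Y := by
  have := Y.sub_mem hx (h.sub_mem (h.2 x hx))
  simpa using this

lemma adapted_map_Wsharp (a : Mackey) :
    ∃ n, ∀ m ≥ n, Adapted m (Wsharp.map a.val.1.toLinearMap) := by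
  obtain ⟨n, hn, -⟩ := IsMackey.exists_finite_block a.2
  obtain ⟨n', -, hn'⟩ := IsMackey.exists_finite_block (a⁻¹).2
  refine ⟨max n n', fun m hm => ⟨fun ω hω => ?_, ?_⟩⟩
  · refine ⟨a.val.1.symm (ω, 0), mem_Wsharp.2 ?_, a.val.1.apply_symm_apply _⟩
    exact hn' ω fun j hj => hω j (by omega)
  · rintro _ ⟨x, hx, rfl⟩ i hi
    have : x = (x.1, 0) := Prod.ext rfl (mem_Wsharp.1 hx)
    rw [this]
    exact hn x.1 i (by omega)

lemma finrank_eq_map_snd_add_comap_inl {A B : Type*} [AddCommGroup A] [Module ℂ A]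
    [AddCommGroup B] [Module ℂ B] [FiniteDimensional ℂ A] [FiniteDimensional ℂ B]
    (G : Submodule ℂ (A × B)) :
    finrank ℂ G = finrank ℂ (G.map (LinearMap.snd ℂ A B)) +
      finrank ℂ (G.comap (LinearMap.inl ℂ A B)) := by
  have h := LinearMap.finrank_range_add_finrank_ker ((LinearMap.snd ℂ A B).domRestrict G)
  rw [LinearMap.range_domRestrict] at h
  rw [← h]
  congr 1
  rw [LinearEquiv.finrank_eq (Submodule.equivMapOfInjective G.subtype G.injective_subtype
      (LinearMap.ker ((LinearMap.snd ℂ A B).domRestrict G))),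
    LinearEquiv.finrank_eq (Submodule.equivMapOfInjective (LinearMap.inl ℂ A B) LinearMap.inl_injective
      (G.comap (LinearMap.inl ℂ A B)))]
  refine congrArg (fun S : Submodule ℂ (A × B) => finrank ℂ S) ?_
  ext ⟨a, b⟩
  constructor
  · rintro ⟨⟨⟨a, b⟩, hG⟩, hk, ⟨⟩⟩
    have hb : b = 0 := hk
    subst hb
    exact ⟨a, hG, rfl⟩
  · rintro ⟨a, ha, ⟨⟩⟩
    exact ⟨⟨(a, 0), ha⟩, rfl, rfl⟩

lemma extZero_injective (n : ℕ) : Function.Injective (extZero n) := fun a b h =>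
  funext fun i => by rw [← extZero_apply_fin n a i, h, extZero_apply_fin]

lemma deg_eq {φ : TT ≃ₗ[ℂ] TT} {n : ℕ} (h : Adapted n (Wsharp.map φ.toLinearMap)) :
    deg φ = finrank ℂ ((Wsharp.map φ.toLinearMap).comap (incl n)) - n := by
  set Y := Wsharp.map φ.toLinearMap with hY
  have hmemY : ∀ x, x ∈ Y ↔ (φ.symm x).2 = 0 := fun x => by
    rw [hY, Submodule.mem_map_equiv, mem_Wsharp]
  have h1 : finrank ℂ (Y.comap (incl n)) = _ := finrank_eq_map_snd_add_comap_inl (Y.comap (incl n))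
  have h2 : finrank ℂ (Y.map piU) =
      finrank ℂ ((Y.comap (incl n)).map (LinearMap.snd ℂ (Fin n → ℂ) (Fin n → ℂ))) := by
    rw [LinearEquiv.finrank_eq (Submodule.equivMapOfInjective (extZero n) (extZero_injective n)
      ((Y.comap (incl n)).map (LinearMap.snd ℂ (Fin n → ℂ) (Fin n → ℂ))))]
    refine congrArg (fun S : Submodule ℂ (ℕ →₀ ℂ) => finrank ℂ S) ?_
    ext u
    constructor
    · rintro ⟨y, hy, rfl⟩
      refine ⟨(restr n y).2, ⟨restr n y, h.incl_restr_mem hy, rfl⟩, ?_⟩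
      have := sub_incl_restr_snd (h.2 y hy)
      exact (sub_eq_zero.1 this).symm
    · rintro ⟨_, ⟨k, hk, rfl⟩, rfl⟩
      exact ⟨incl n k, hk, rfl⟩
  let f : (Fin n → ℂ) →ₗ[ℂ] (ℕ →₀ ℂ) :=
    piU ∘ₗ φ.symm.toLinearMap ∘ₗ incl n ∘ₗ LinearMap.inl ℂ _ _
  have h3 := LinearMap.finrank_range_add_finrank_ker f
  have h4 : LinearMap.range f = (Wsharp.map φ.symm.toLinearMap).map piU := by
    ext u
    constructor
    · rintro ⟨a, rfl⟩
      refine ⟨_, ⟨incl n (a, 0), mem_Wsharp.2 ?_, rfl⟩, rfl⟩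
      simp [incl_apply]
    · rintro ⟨_, ⟨x, hx, rfl⟩, rfl⟩
      have hx2 : x.2 = 0 := mem_Wsharp.1 hx
      have hr : restr n x = ((restr n x).1, 0) := by
        refine Prod.ext rfl ?_
        rw [restr_apply, hx2]; rfl
      refine ⟨(restr n x).1, ?_⟩
      have := (hmemY _).1 (h.sub_mem (x := x) (by simp [hx2]))
      rw [map_sub, Prod.snd_sub, sub_eq_zero, hr] at this
      exact this.symm
  have h5 : LinearMap.ker f = (Y.comap (incl n)).comap (LinearMap.inl ℂ _ _) := by
    ext a
    rw [LinearMap.mem_ker, Submodule.mem_comap, Submodule.mem_comap, hmemY]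
    rfl
  rw [h4, h5, finrank_fin_fun] at h3
  rw [deg, ← hY, h2]
  omega

lemma map_Wsharp_of_mem_StW {a : Mackey} (ha : a ∈ StW) :
    Wsharp.map a.val.1.toLinearMap = Wsharp := by
  have ha' : (Wsharp.map a.val.1.toLinearMap) ⊓ Vsub = Wsub := ha
  have hle : Wsharp ≤ Wsharp.map a.val.1.toLinearMap := by
    intro x hx
    rw [Submodule.mem_map_equiv, mem_Wsharp]
    have hx' : x = (x.1, 0) := Prod.ext rfl (mem_Wsharp.1 hx)
    have hM : IsMackey a.val.1.symm a.val.2.unop.symm := (a⁻¹).2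
    ext j
    rw [hx', hM.snd_apply, Finsupp.linearCombination_apply]
    refine Finset.sum_eq_zero fun i _ => ?_
    have hb : basisW i ∈ Wsharp.map a.val.1.toLinearMap := by
      have : basisW i ∈ Wsub := mem_Wsub.2 ⟨⟨_, rfl⟩, rfl⟩
      rw [← ha'] at this
      exact this.1
    rw [Submodule.mem_map_equiv, mem_Wsharp] at hb
    have h0 : (a.val.1.symm (basisW i)).2 j = 0 := by rw [hb]; rfl
    rw [← pairB_single_right, hM, pairB_basisW] at h0
    exact h0 ▸ zero_smul ℂ (x.1 i)
  refine le_antisymm (fun x hx => ?_) hle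
  have hU : ((0 : ℕ → ℂ), x.2) ∈ Wsharp.map a.val.1.toLinearMap := by
    have := Submodule.sub_mem _ hx (hle (mem_Wsharp.2 (rfl : (x.1, (0 : ℕ →₀ ℂ)).2 = 0)))
    convert this using 1
    ext <;> simp
  have : ((0 : ℕ → ℂ), x.2) ∈ Wsub := ha' ▸ ⟨hU, mem_Vsub.2 ⟨0, rfl⟩⟩
  exact mem_Wsharp.2 (mem_Wsub.1 this).2

/-- An element of the Mackey group fixing `δ_i` for `i ≥ n` fixes every sequence supported in
degrees `≥ n`. -/
lemma apply_eq_self_of_fix {a : Mackey} {n : ℕ} (h : ∀ i ≥ n, a.val.1 (basisW i) = basisW i)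
    {ω : ℕ → ℂ} (hω : ∀ j < n, ω j = 0) : a.val.1 (ω, 0) = (ω, 0) := by
  have hM : IsMackey a.val.1 a.val.2.unop := a.2
  refine ext_of_pairB_left fun y => ?_
  have hy : ∀ i ≥ n, (a.val.2.unop y).1 i = y.1 i := fun i hi => by
    rw [← pairB_basisW, ← hM, h i hi, pairB_basisW]
  rw [hM, pairB_apply, pairB_apply, ← sub_eq_zero]
  simp only [map_zero, add_zero]
  rw [← map_sub, Finsupp.linearCombination_apply]
  refine Finset.sum_eq_zero fun i _ => ?_
  rcases lt_or_ge i n with hi | hi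
  · simp [hω i hi]
  · simp [hy i hi]

lemma exists_fix_of_mem_FinSet {a : Mackey} (ha : a ∈ FinSet) :
    ∃ n, ∀ i ≥ n, a.val.1 (basisW i) = basisW i := by
  obtain ⟨n, hn⟩ := ha.2.bddAbove
  refine ⟨n + 1, fun i hi => ?_⟩
  by_contra hne
  have := hn (Or.inl hne)
  omega

lemma Wsharp_decomp (n : ℕ) (x : TT) (hx : x ∈ Wsharp) :
    ∃ ω : ℕ → ℂ, (∀ j < n, ω j = 0) ∧ x = incl n ((restr n x).1, 0) + (ω, 0) := by
  have hx2 := mem_Wsharp.1 hx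
  refine ⟨(x - incl n (restr n x)).1, sub_incl_restr_fst n x, ?_⟩
  refine Prod.ext ?_ ?_
  · simp [incl_apply]
  · simp [incl_apply, hx2]

lemma restr_tail {n : ℕ} {ω : ℕ → ℂ} (hω : ∀ j < n, ω j = 0) :
    restr n (ω, 0) = 0 := by
  rw [restr_apply]
  exact Prod.ext (funext fun i => hω i i.2) (funext fun i => rfl)

lemma deg_eq_zero_of_map_eq {a κ : Mackey} (hκ : κ ∈ FinSet)
    (h : Wsharp.map a.val.1.toLinearMap = Wsharp.map κ.val.1.toLinearMap) :
    deg a.val.1 = 0 := by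
  obtain ⟨n₁, hn₁⟩ := adapted_map_Wsharp a
  obtain ⟨n₂, hn₂⟩ := exists_fix_of_mem_FinSet hκ
  set n := max n₁ n₂
  have hA : Adapted n (Wsharp.map a.val.1.toLinearMap) := hn₁ n (le_max_left _ _)
  have hfix : ∀ ω : ℕ → ℂ, (∀ j < n, ω j = 0) → κ.val.1 (ω, 0) = (ω, 0) := fun ω hω =>
    apply_eq_self_of_fix (fun i hi => hn₂ i (le_trans (le_max_right _ _) hi)) hω
  rw [deg_eq hA]
  rw [h] at hA ⊢
  set Y := Wsharp.map κ.val.1.toLinearMap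
  have hκY : ∀ b : Fin n → ℂ, κ.val.1 (incl n (b, 0)) ∈ Y := fun b =>
    ⟨_, mem_Wsharp.2 (by simp [incl_apply]), rfl⟩
  let f : (Fin n → ℂ) →ₗ[ℂ] TruncSpace n :=
    restr n ∘ₗ κ.val.1.toLinearMap ∘ₗ incl n ∘ₗ LinearMap.inl ℂ _ _
  have hrange : Y.comap (incl n) = LinearMap.range f := by
    ext k
    constructor
    · rintro ⟨x, hx, hxk⟩
      obtain ⟨ω, hω, hxω⟩ := Wsharp_decomp n x hx
      refine ⟨(restr n x).1, ?_⟩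
      have hxk' : κ.val.1 x = incl n k := hxk
      rw [← restr_incl n k, ← hxk']
      conv_rhs => rw [hxω, map_add, map_add, hfix ω hω, restr_tail hω, add_zero]
      rfl
    · rintro ⟨b, rfl⟩
      exact hA.incl_restr_mem (hκY b)
  have hinj : Function.Injective f := by
    refine (injective_iff_map_eq_zero f).2 fun b hb => ?_
    have hb' : restr n (κ.val.1 (incl n (b, 0))) = 0 := hb
    obtain ⟨ω, hω, he⟩ : ∃ ω : ℕ → ℂ, (∀ j < n, ω j = 0) ∧ κ.val.1 (incl n (b, 0)) = (ω, 0) := by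
      refine ⟨_, sub_incl_restr_fst n (κ.val.1 (incl n (b, 0))), ?_⟩
      have h2 := sub_incl_restr_snd (hA.2 _ (hκY b))
      rw [hb', map_zero, sub_zero] at h2 ⊢
      exact Prod.ext rfl h2
    rw [← hfix ω hω] at he
    have h3 := congrArg (restr n) (κ.val.1.injective he)
    rw [restr_incl, restr_tail hω] at h3
    exact congrArg Prod.fst h3
  rw [hrange, LinearMap.finrank_range_of_inj hinj, finrank_fin_fun, sub_self]

lemma exists_equiv_of_finrank_eq {n : ℕ} (G : Submodule ℂ (TruncSpace n)) (hG : finrank ℂ G = n) :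
    ∃ g : TruncSpace n ≃ₗ[ℂ] TruncSpace n, (∀ b, g (b, 0) ∈ G) ∧ ∀ k ∈ G, ∃ b, g (b, 0) = k := by
  obtain ⟨G', hc⟩ := G.exists_isCompl
  have hsum := Submodule.finrank_add_eq_of_isCompl hc
  have hG' : finrank ℂ G' = n := by
    rw [Module.finrank_prod, finrank_fin_fun] at hsum
    omega
  let e₁ : (Fin n → ℂ) ≃ₗ[ℂ] G := LinearEquiv.ofFinrankEq _ _ (by rw [hG, finrank_fin_fun])
  let e₂ : (Fin n → ℂ) ≃ₗ[ℂ] G' := LinearEquiv.ofFinrankEq _ _ (by rw [hG', finrank_fin_fun])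
  have key : ∀ b, ((e₁.prodCongr e₂).trans (Submodule.prodEquivOfIsCompl G G' hc)) (b, 0) = e₁ b :=
    fun b => by simp
  refine ⟨(e₁.prodCongr e₂).trans (Submodule.prodEquivOfIsCompl G G' hc), fun b => ?_,
    fun k hk => ⟨e₁.symm ⟨k, hk⟩, ?_⟩⟩
  · rw [key]; exact (e₁ b).2
  · rw [key, LinearEquiv.apply_symm_apply]

lemma exists_mem_FinSet_of_deg_eq_zero {a : Mackey} (h : deg a.val.1 = 0) :
    ∃ κ ∈ FinSet, Wsharp.map κ.val.1.toLinearMap = Wsharp.map a.val.1.toLinearMap := by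
  obtain ⟨n, hn⟩ := adapted_map_Wsharp a
  have hA := hn n le_rfl
  rw [deg_eq hA] at h
  set Y := Wsharp.map a.val.1.toLinearMap
  obtain ⟨g, hg, hg'⟩ := exists_equiv_of_finrank_eq (Y.comap (incl n)) (by omega)
  have hincl : ∀ k, (blockMackey n g).val.1 (incl n k) = incl n (g k) := fun k => by
    rw [blockMackey_apply, restr_incl, ← map_add, add_sub_cancel]
  have htail : ∀ ω : ℕ → ℂ, (∀ j < n, ω j = 0) → (blockMackey n g).val.1 (ω, 0) = (ω, 0) :=
    fun ω hω => by rw [blockMackey_apply, restr_tail hω]; simp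
  refine ⟨blockMackey n g, blockMackey_mem_FinSet n g, le_antisymm ?_ fun y hy => ?_⟩
  · rintro _ ⟨x, hx, rfl⟩
    obtain ⟨ω, hω, hxω⟩ := Wsharp_decomp n x hx
    change (blockMackey n g).val.1 x ∈ Y
    rw [hxω, map_add, hincl, htail ω hω]
    exact Y.add_mem (hg _) (hA.1 ω hω)
  · obtain ⟨b, hb⟩ := hg' (restr n y) (hA.incl_restr_mem hy)
    have h1 := sub_incl_restr_fst n y
    have h2 := sub_incl_restr_snd (hA.2 y hy)
    refine ⟨incl n (b, 0) + ((y - incl n (restr n y)).1, 0), mem_Wsharp.2 (by simp [incl_apply]), ?_⟩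
    change (blockMackey n g).val.1 _ = y
    rw [map_add, hincl, htail _ h1, hb, ← h2]
    exact add_sub_cancel _ _

lemma map_Wsharp_mul (a b : Mackey) :
    Wsharp.map (a * b).val.1.toLinearMap =
      (Wsharp.map b.val.1.toLinearMap).map a.val.1.toLinearMap :=
  Submodule.map_comp b.val.1.toLinearMap a.val.1.toLinearMap Wsharp

end

open Pointwise in
/-- An element of `G(T,R)` has degree `0` iff it is a product of an element of `Fin`
and an element of `St_W`. -/
theorem stmt15 : {a : Mackey | deg a.val.1 = 0} = FinSet * StW := by
  ext a
  rw [Set.mem_ofPred_eq, Set.mem_mul]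
  constructor
  · intro h
    obtain ⟨κ, hκ, hmap⟩ := exists_mem_FinSet_of_deg_eq_zero h
    refine ⟨κ, hκ, κ⁻¹ * a, ?_, mul_inv_cancel_left κ a⟩
    change Wsharp.map (κ⁻¹ * a).val.1.toLinearMap ⊓ Vsub = Wsub
    rw [map_Wsharp_mul, ← hmap, ← map_Wsharp_mul, inv_mul_cancel]
    exact (congrArg (· ⊓ Vsub) (Submodule.map_id Wsharp)).trans Wsharp_inf_Vsub
  · rintro ⟨κ, hκ, s, hs, rfl⟩
    exact deg_eq_zero_of_map_eq hκ (by rw [map_Wsharp_mul, map_Wsharp_of_mem_StW hs])
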